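/- If the Bernoulli schemes BS(p) and BS(q) (p, q strictly positive probability vectors on finite alphabets) are measurably isomorphic — i.e., there exists a homomorphism from BS(p) to BS(q), invertible after discarding sets of measure zero, whose inverse is also a homomorphism — then H(p) = H(q). -/

import Mathlib

open MeasureTheory ENNReal Filter

noncomputable section

/-- The left shift transformation on bi-infinite sequences: `(shift x) n = x (n+1)`. -/
def shift {A : Type*} : (ℤ → A) → (ℤ → A) := fun x n => x (n + 1)

/-- `φ` is a homomorphism (factor map) from the shift system `(ℤ → A, μ, shift)` to
`(ℤ → B, ν, shift)`, defined on the shift-invariant full-measure domain `D`. -/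
structure IsFactorMap {A B : Type*} [MeasurableSpace A] [MeasurableSpace B]
    (μ : Measure (ℤ → A)) (ν : Measure (ℤ → B))
    (D : Set (ℤ → A)) (φ : (ℤ → A) → (ℤ → B)) : Prop where
  measurable_map : Measurable φ
  dom_measurable : MeasurableSet D
  dom_shift_invariant : shift ⁻¹' D = D
  dom_full : μ D = 1
  pushforward : ν = μ.map φ
  equivariant : ∀ x ∈ D, φ (shift x) = shift (φ x)

/-- The window `[-q, r]` of `x` determines the zero coordinate of the image under `φ`
(among points of the domain `D`). -/
def DeterminesAt {A B : Type*} (D : Set (ℤ → A)) (φ : (ℤ → A) → (ℤ → B))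
    (q r : ℕ) (x : ℤ → A) : Prop :=
  ∀ y ∈ D, (∀ i : ℤ, -(q : ℤ) ≤ i → i ≤ (r : ℤ) → y i = x i) → φ y 0 = φ x 0

/-- A homomorphism `φ` with domain `D` is finitary if for almost every `x` in the domain
there are nonnegative integers `q`, `r` such that the coordinates `x_{-q}, …, x_r`
determine `(φ x)_0`. -/
def IsFinitary {A B : Type*} [MeasurableSpace A] [MeasurableSpace B]
    (μ : Measure (ℤ → A)) (D : Set (ℤ → A)) (φ : (ℤ → A) → (ℤ → B)) : Prop :=
  ∀ᵐ x ∂μ, x ∈ D → ∃ q r : ℕ, DeterminesAt D φ q r x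

/-- The code length `C(x) = q(x) + r(x)` with `q(x), r(x)` minimal such that the window
`[-q(x), r(x)]` determines the zero output coordinate (`⊤` if no finite window works). -/
def codeLength {A B : Type*} (D : Set (ℤ → A)) (φ : (ℤ → A) → (ℤ → B))
    (x : ℤ → A) : ℝ≥0∞ :=
  ⨅ (q : ℕ) (r : ℕ) (_ : DeterminesAt D φ q r x), ((q : ℝ≥0∞) + (r : ℝ≥0∞))

/-- `μ` is the Bernoulli (product) measure on `(ℤ → A)` given by the probability vector `p`. -/
def IsBernoulliMeasure {A : Type*} [MeasurableSpace A] (μ : Measure (ℤ → A)) (p : A → ℝ) : Prop :=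
  ∀ (F : Finset ℤ) (s : ℤ → A),
    μ {x | ∀ i ∈ F, x i = s i} = ENNReal.ofReal (∏ i ∈ F, p (s i))

/-- A strictly positive probability vector on a finite alphabet. -/
def IsProbVector {A : Type*} [Fintype A] (p : A → ℝ) : Prop :=
  (∀ i, 0 < p i) ∧ ∑ i, p i = 1

/-- The entropy `H(p) = -∑ p_i log p_i` of a probability vector. -/
def vecEntropy {A : Type*} [Fintype A] (p : A → ℝ) : ℝ := -∑ i, p i * Real.log (p i)

/-- A finitary isomorphism: a pair of mutually inverse finitary factor maps. -/
def IsFinitaryIsomorphism {A B : Type*} [MeasurableSpace A] [MeasurableSpace B]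
    (μ : Measure (ℤ → A)) (ν : Measure (ℤ → B))
    (D : Set (ℤ → A)) (E : Set (ℤ → B))
    (φ : (ℤ → A) → (ℤ → B)) (ψ : (ℤ → B) → (ℤ → A)) : Prop :=
  IsFactorMap μ ν D φ ∧ IsFactorMap ν μ E ψ ∧
  IsFinitary μ D φ ∧ IsFinitary ν E ψ ∧
  (∀ x ∈ D, φ x ∈ E ∧ ψ (φ x) = x) ∧ (∀ y ∈ E, ψ y ∈ D ∧ φ (ψ y) = y)

/-- A measurable isomorphism of shift systems: a pair of mutually inverse factor maps
(after discarding sets of measure zero). -/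
def IsMeasurableIsomorphism {A B : Type*} [MeasurableSpace A] [MeasurableSpace B]
    (μ : Measure (ℤ → A)) (ν : Measure (ℤ → B))
    (D : Set (ℤ → A)) (E : Set (ℤ → B))
    (φ : (ℤ → A) → (ℤ → B)) (ψ : (ℤ → B) → (ℤ → A)) : Prop :=
  IsFactorMap μ ν D φ ∧ IsFactorMap ν μ E ψ ∧
  (∀ x ∈ D, φ x ∈ E ∧ ψ (φ x) = x) ∧ (∀ y ∈ E, ψ y ∈ D ∧ φ (ψ y) = y)

/-!
Let `φ` be a factor map from `BS(p)` to `BS(q)`. Up to an event of probability `ε`, the coordinate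
`φ(x)_0` is a function of finitely many coordinates `x_{-m}, …, x_m`. Shifting this window predicts
the block `φ(x)_0, …, φ(x)_{n-1}`, whose entropy is `n H(q)`, from `x_{-m}, …, x_{n+m}`, whose
entropy is `(n + 2m + 1) H(p)`. Each letter is predicted with error at most `ε`, so by Fano's
inequality `n H(q) ≤ (n + 2m + 1) H(p) + n δ(ε)`, where `δ(ε) → 0` as `ε → 0`. Dividing by `n` and
letting first `n → ∞` and then `ε → 0` gives `H(q) ≤ H(p)`; the inverse map gives `H(p) ≤ H(q)`.
-/

open ProbabilityTheory

section RandomVariable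

variable {Ω α : Type*} [MeasurableSpace Ω] {μ : Measure Ω} [IsFiniteMeasure μ]
  [MeasurableSpace α] [DiscreteMeasurableSpace α]

lemma integrable_comp_of_finite [Finite α] {X : Ω → α} (hX : Measurable X) (g : α → ℝ) :
    Integrable (fun ω => g (X ω)) μ :=
  (Integrable.of_finite (μ := μ.map X) (f := g)).comp_measurable hX

lemma integral_comp_eq_sum [Fintype α] {X : Ω → α} (hX : Measurable X) (g : α → ℝ) :
    ∫ ω, g (X ω) ∂μ = ∑ a, μ.real (X ⁻¹' {a}) * g a := by
  rw [← integral_map (f := g) hX.aemeasurable (by fun_prop),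
    integral_fintype Integrable.of_finite]
  simp only [map_measureReal_apply hX (measurableSet_singleton _), smul_eq_mul]

lemma ae_measureReal_preimage_singleton_pos [Countable α] {X : Ω → α} (hX : Measurable X) :
    ∀ᵐ ω ∂μ, 0 < μ.real (X ⁻¹' {X ω}) := by
  have hlaw : ∀ᵐ a ∂μ.map X, 0 < (μ.map X).real {a} :=
    ae_iff_of_countable.2 fun a ha => ENNReal.toReal_pos ha (measure_ne_top _ _)
  filter_upwards [ae_of_ae_map hX.aemeasurable hlaw] with ω hω
  rwa [map_measureReal_apply hX (measurableSet_singleton _)] at hω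

end RandomVariable

section ShannonEntropy

/-- The Shannon entropy, in nats, of a random variable with finitely many values. -/
def shannonEntropy {Ω α : Type*} [MeasurableSpace Ω] [Fintype α] (X : Ω → α) (μ : Measure Ω) : ℝ :=
  ∑ a, Real.negMulLog (μ.real (X ⁻¹' {a}))

variable {Ω α β : Type*} [MeasurableSpace Ω] {μ : Measure Ω}
  [Fintype α] [MeasurableSpace α] [DiscreteMeasurableSpace α]
  [Fintype β] [MeasurableSpace β] [DiscreteMeasurableSpace β]

lemma shannonEntropy_map {Ω' : Type*} [MeasurableSpace Ω'] {f : Ω → Ω'} (hf : Measurable f)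
    {X : Ω' → α} (hX : Measurable X) :
    shannonEntropy X (μ.map f) = shannonEntropy (X ∘ f) μ := by
  simp only [shannonEntropy, Set.preimage_comp,
    map_measureReal_apply hf (hX (measurableSet_singleton _))]

lemma shannonEntropy_eq_integral [IsFiniteMeasure μ] {X : Ω → α} (hX : Measurable X) :
    shannonEntropy X μ = ∫ ω, -Real.log (μ.real (X ⁻¹' {X ω})) ∂μ := by
  rw [integral_comp_eq_sum hX fun a => -Real.log (μ.real (X ⁻¹' {a}))]
  simp only [shannonEntropy, Real.negMulLog, neg_mul, mul_neg]

lemma shannonEntropy_comp_le [IsFiniteMeasure μ] {X : Ω → α} (hX : Measurable X) (g : α → β) :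
    shannonEntropy (fun ω => g (X ω)) μ ≤ shannonEntropy X μ := by
  have hgX : Measurable fun ω => g (X ω) := (measurable_of_finite g).comp hX
  rw [shannonEntropy_eq_integral hX, shannonEntropy_eq_integral hgX]
  refine integral_mono_ae
    (integrable_comp_of_finite hgX fun b => -Real.log (μ.real ((fun ω => g (X ω)) ⁻¹' {b})))
    (integrable_comp_of_finite hX fun a => -Real.log (μ.real (X ⁻¹' {a}))) ?_
  filter_upwards [ae_measureReal_preimage_singleton_pos hX] with ω hω
  exact neg_le_neg (Real.log_le_log hω (measureReal_mono fun _ h => congrArg g h))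

lemma shannonEntropy_pi_of_iIndepFun {ι : Type*} [Fintype ι] [DecidableEq ι] {γ : ι → Type*}
    [∀ i, Fintype (γ i)] [∀ i, MeasurableSpace (γ i)] [∀ i, DiscreteMeasurableSpace (γ i)]
    {X : ∀ i, Ω → γ i} (hX : ∀ i, Measurable (X i)) (hindep : iIndepFun X μ) :
    shannonEntropy (fun ω i => X i ω) μ = ∑ i, shannonEntropy (X i) μ := by
  have := hindep.isProbabilityMeasure
  have hlaw (w : ∀ i, γ i) :
      μ.real ((fun ω i => X i ω) ⁻¹' {w}) = ∏ i, μ.real (X i ⁻¹' {w i}) := by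
    rw [show (fun ω i => X i ω) ⁻¹' {w} = ⋂ i, X i ⁻¹' {w i} by ext; simp [funext_iff],
      measureReal_def, hindep.meas_iInter fun i => ⟨_, measurableSet_singleton _, rfl⟩,
      ENNReal.toReal_prod]
    rfl
  calc shannonEntropy (fun ω i => X i ω) μ
      = ∫ ω, ∑ i, -Real.log (μ.real (X i ⁻¹' {X i ω})) ∂μ := by
        rw [shannonEntropy_eq_integral (measurable_pi_lambda _ hX)]
        refine integral_congr_ae ?_
        filter_upwards [ae_all_iff.2 fun i => ae_measureReal_preimage_singleton_pos (hX i)]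
          with ω hω
        rw [hlaw, Real.log_prod fun i _ => (hω i).ne', Finset.sum_neg_distrib]
    _ = ∑ i, ∫ ω, -Real.log (μ.real (X i ⁻¹' {X i ω})) ∂μ :=
        integral_finsetSum _ fun i _ =>
          integrable_comp_of_finite (hX i) fun a => -Real.log (μ.real (X i ⁻¹' {a}))
    _ = ∑ i, shannonEntropy (X i) μ := by simp only [shannonEntropy_eq_integral (hX _)]

lemma shannonEntropy_le_integral_neg_log [IsProbabilityMeasure μ] {X : Ω → α} (hX : Measurable X)
    {w : α → ℝ} (hw_nonneg : ∀ a, 0 ≤ w a) (hw_sum : ∑ a, w a ≤ 1)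
    (hw_pos : ∀ᵐ ω ∂μ, 0 < w (X ω)) :
    shannonEntropy X μ ≤ ∫ ω, -Real.log (w (X ω)) ∂μ := by
  let P (a : α) : ℝ := μ.real (X ⁻¹' {a})
  have hint (g : α → ℝ) : Integrable (fun ω => g (X ω)) μ := integrable_comp_of_finite hX g
  have hratio : ∫ ω, w (X ω) / P (X ω) ∂μ ≤ 1 := by
    rw [integral_comp_eq_sum hX fun a => w a / P a]
    refine (Finset.sum_le_sum fun a _ => ?_).trans hw_sum
    rcases eq_or_ne (P a) 0 with hP | hP
    · exact (mul_eq_zero_of_left hP _).trans_le (hw_nonneg a)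
    · exact (mul_div_cancel₀ _ hP).le
  have hlog : ∫ ω, (-Real.log (P (X ω)) - -Real.log (w (X ω))) ∂μ
      ≤ ∫ ω, (w (X ω) / P (X ω) - 1) ∂μ := by
    refine integral_mono_ae (hint fun a => -Real.log (P a) - -Real.log (w a))
      (hint fun a => w a / P a - 1) ?_
    filter_upwards [hw_pos, ae_measureReal_preimage_singleton_pos hX] with ω hw hP
    calc -Real.log (P (X ω)) - -Real.log (w (X ω))
        = Real.log (w (X ω) / P (X ω)) := by rw [Real.log_div hw.ne' hP.ne']; ring
      _ ≤ w (X ω) / P (X ω) - 1 := Real.log_le_sub_one_of_pos (div_pos hw hP)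
  rw [integral_sub (hint fun a => -Real.log (P a)) (hint fun a => -Real.log (w a)),
    integral_sub (hint fun a => w a / P a) (integrable_const 1), integral_const, probReal_univ,
    one_smul, ← shannonEntropy_eq_integral hX] at hlog
  linarith

/-- The integral dominates the conditional entropy of `Y` given `X`. -/
lemma shannonEntropy_le_add_integral_neg_log [IsProbabilityMeasure μ] {X : Ω → α} {Y : Ω → β}
    (hX : Measurable X) (hY : Measurable Y) {W : α → β → ℝ} (hW_pos : ∀ a b, 0 < W a b)
    (hW_sum : ∀ a, ∑ b, W a b ≤ 1) :
    shannonEntropy Y μ ≤ shannonEntropy X μ + ∫ ω, -Real.log (W (X ω) (Y ω)) ∂μ := by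
  let P (a : α) : ℝ := μ.real (X ⁻¹' {a})
  have hXY : Measurable fun ω => (X ω, Y ω) := hX.prodMk hY
  have hX_pos := ae_measureReal_preimage_singleton_pos (μ := μ) hX
  have hP_sum : ∑ a, P a = 1 := by
    simpa using (integral_comp_eq_sum (μ := μ) hX fun _ => 1).symm
  have hPW_sum : ∑ z : α × β, P z.1 * W z.1 z.2 ≤ 1 :=
    calc ∑ z : α × β, P z.1 * W z.1 z.2 = ∑ a, P a * ∑ b, W a b := by
          simp only [Fintype.sum_prod_type, Finset.mul_sum]
      _ ≤ ∑ a, P a := Finset.sum_le_sum fun a _ =>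
          mul_le_of_le_one_right measureReal_nonneg (hW_sum a)
      _ = 1 := hP_sum
  calc shannonEntropy Y μ
      ≤ shannonEntropy (fun ω => (X ω, Y ω)) μ := shannonEntropy_comp_le hXY Prod.snd
    _ ≤ ∫ ω, -Real.log (P (X ω) * W (X ω) (Y ω)) ∂μ :=
        shannonEntropy_le_integral_neg_log hXY (w := fun z => P z.1 * W z.1 z.2)
          (fun z => mul_nonneg measureReal_nonneg (hW_pos _ _).le) hPW_sum
          (hX_pos.mono fun ω hω => mul_pos hω (hW_pos _ _))
    _ = ∫ ω, (-Real.log (P (X ω)) + -Real.log (W (X ω) (Y ω))) ∂μ :=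
        integral_congr_ae (hX_pos.mono fun ω hω => by
          simp only
          rw [Real.log_mul hω.ne' (hW_pos _ _).ne', neg_add])
    _ = shannonEntropy X μ + ∫ ω, -Real.log (W (X ω) (Y ω)) ∂μ := by
        rw [shannonEntropy_eq_integral hX]
        exact integral_add (integrable_comp_of_finite hX fun a => -Real.log (P a))
          (integrable_comp_of_finite hXY fun z => -Real.log (W z.1 z.2))

end ShannonEntropy

section Fano

/-- The noisy channel which transmits the letter `c` correctly with weight `1 - ε` and errs to each
other letter with equal weight. The error weight is `ε / |β|` rather than `ε / (|β| - 1)`, so that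
it is positive also when `|β| = 1`; the outputs then have total weight at most one. -/
def symmetricChannel {β : Type*} [Fintype β] [DecidableEq β] (ε : ℝ) (c b : β) : ℝ :=
  if b = c then 1 - ε else ε / Fintype.card β

/-- The bound on the conditional entropy of a `k`-valued random variable given an estimate of it
which errs with probability at most `ε`. -/
def fanoBound (k : ℕ) (ε : ℝ) : ℝ :=
  Real.negMulLog ε + ε * Real.log k - Real.log (1 - ε)

lemma tendsto_fanoBound (k : ℕ) : Tendsto (fanoBound k) (nhds 0) (nhds 0) := by
  have hcont : ContinuousAt (fanoBound k) 0 :=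
    (Real.continuous_negMulLog.continuousAt.add (by fun_prop)).sub
      ((continuousAt_const.sub continuousAt_id).log (by simp))
  simpa [fanoBound] using hcont.tendsto

variable {β : Type*} [Fintype β] {ε : ℝ}

lemma symmetricChannel_pos [DecidableEq β] (hε : ε ∈ Set.Ioo 0 1) (c b : β) :
    0 < symmetricChannel ε c b := by
  have : 0 < Fintype.card β := Fintype.card_pos_iff.2 ⟨b⟩
  unfold symmetricChannel
  split_ifs
  · exact sub_pos.2 hε.2
  · exact div_pos hε.1 (mod_cast this)

lemma sum_symmetricChannel_le_one [DecidableEq β] (hε : 0 ≤ ε) (c : β) :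
    ∑ b, symmetricChannel ε c b ≤ 1 := by
  have hcard : (Fintype.card β : ℝ) ≠ 0 := Nat.cast_ne_zero.2 (Fintype.card_pos_iff.2 ⟨c⟩).ne'
  calc ∑ b, symmetricChannel ε c b
      ≤ ∑ b, ((if b = c then 1 - ε else 0) + ε / Fintype.card β) := by
        refine Finset.sum_le_sum fun b _ => ?_
        have : 0 ≤ ε / Fintype.card β := by positivity
        unfold symmetricChannel
        split_ifs <;> linarith
    _ = 1 := by
        rw [Finset.sum_add_distrib, Finset.sum_ite_eq' Finset.univ c,
          if_pos (Finset.mem_univ c), Finset.sum_const, Finset.card_univ, nsmul_eq_mul,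
          mul_div_cancel₀ _ hcard, sub_add_cancel]

lemma neg_log_symmetricChannel_le [DecidableEq β] (hε : ε ∈ Set.Ioo 0 1) (c b : β) :
    -Real.log (symmetricChannel ε c b)
      ≤ -Real.log (1 - ε) + if b = c then 0 else Real.log (Fintype.card β / ε) := by
  unfold symmetricChannel
  split_ifs
  · exact (add_zero _).ge
  · have : Real.log (1 - ε) ≤ 0 := Real.log_nonpos (sub_nonneg.2 hε.2.le) (by linarith [hε.1])
    rw [← Real.log_inv (ε / _), inv_div]
    linarith

variable {Ω : Type*} [MeasurableSpace Ω] {μ : Measure Ω} [IsProbabilityMeasure μ]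
  [MeasurableSpace β] [DiscreteMeasurableSpace β]

lemma integral_neg_log_symmetricChannel_le [DecidableEq β] {Y Z : Ω → β}
    (hY : Measurable Y) (hZ : Measurable Z) (hε : ε ∈ Set.Ioo 0 1)
    (hYZ : μ.real {ω | Y ω ≠ Z ω} ≤ ε) :
    ∫ ω, -Real.log (symmetricChannel ε (Z ω) (Y ω)) ∂μ ≤ fanoBound (Fintype.card β) ε := by
  obtain ⟨ω₀⟩ := μ.nonempty_of_neZero
  have hcard : (1 : ℝ) ≤ Fintype.card β := mod_cast Fintype.card_pos_iff.2 ⟨Y ω₀⟩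
  set L : ℝ := Real.log (Fintype.card β / ε) with hL
  have hL_nonneg : 0 ≤ L := Real.log_nonneg ((one_le_div hε.1).2 (hε.2.le.trans hcard))
  have herr : MeasurableSet {ω | Y ω ≠ Z ω} := (measurableSet_eq_fun hY hZ).compl
  have hL_int : Integrable ({ω | Y ω ≠ Z ω}.indicator fun _ => L) μ :=
    (integrable_const L).indicator herr
  calc ∫ ω, -Real.log (symmetricChannel ε (Z ω) (Y ω)) ∂μ
      ≤ ∫ ω, (-Real.log (1 - ε) + {ω | Y ω ≠ Z ω}.indicator (fun _ => L) ω) ∂μ := by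
        refine integral_mono (integrable_comp_of_finite (hZ.prodMk hY)
          fun z => -Real.log (symmetricChannel ε z.1 z.2)) ((integrable_const _).add hL_int)
          fun ω => (neg_log_symmetricChannel_le hε _ _).trans_eq ?_
        simp [Set.indicator_apply, hL]
    _ = -Real.log (1 - ε) + μ.real {ω | Y ω ≠ Z ω} * L := by
        rw [integral_add (integrable_const _) hL_int, integral_indicator_const L herr]
        simp
    _ ≤ -Real.log (1 - ε) + ε * L := by gcongr
    _ = fanoBound (Fintype.card β) ε := by
        rw [hL, Real.log_div (zero_lt_one.trans_le hcard).ne' hε.1.ne', fanoBound, Real.negMulLog]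
        ring

/-- Compare the conditional law of `(Y i)` given `X` with the product of the symmetric channels
centred at the estimates `g i (X ω)`. -/
lemma shannonEntropy_pi_le_add_fanoBound {α ι : Type*} [Fintype α]
    [MeasurableSpace α] [DiscreteMeasurableSpace α] [Fintype ι] [DecidableEq ι] {X : Ω → α}
    {Y : ι → Ω → β} (hX : Measurable X) (hY : ∀ i, Measurable (Y i)) (g : ι → α → β)
    (hε : ε ∈ Set.Ioo 0 1) (hYg : ∀ i, μ.real {ω | Y i ω ≠ g i (X ω)} ≤ ε) :
    shannonEntropy (fun ω i => Y i ω) μ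
      ≤ shannonEntropy X μ + Fintype.card ι * fanoBound (Fintype.card β) ε := by
  classical
  have hgX (i : ι) : Measurable fun ω => g i (X ω) := (measurable_of_finite (g i)).comp hX
  have hpos (i : ι) (a : α) (b : β) := symmetricChannel_pos hε (g i a) b
  have hsum (a : α) : ∑ y : ι → β, ∏ i, symmetricChannel ε (g i a) (y i) ≤ 1 := by
    rw [← Fintype.prod_sum fun i b => symmetricChannel ε (g i a) b]
    exact Finset.prod_le_one (fun i _ => Finset.sum_nonneg fun b _ => (hpos i a b).le)
      fun i _ => sum_symmetricChannel_le_one hε.1.le _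
  refine (shannonEntropy_le_add_integral_neg_log hX (measurable_pi_lambda _ hY)
    (W := fun a y => ∏ i, symmetricChannel ε (g i a) (y i))
    (fun a y => Finset.prod_pos fun i _ => hpos i a (y i)) hsum).trans ?_
  gcongr
  calc ∫ ω, -Real.log (∏ i, symmetricChannel ε (g i (X ω)) (Y i ω)) ∂μ
      = ∫ ω, ∑ i, -Real.log (symmetricChannel ε (g i (X ω)) (Y i ω)) ∂μ := by
        simp only [Real.log_prod fun i _ => (hpos i _ _).ne', Finset.sum_neg_distrib]
    _ = ∑ i, ∫ ω, -Real.log (symmetricChannel ε (g i (X ω)) (Y i ω)) ∂μ :=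
        integral_finsetSum _ fun i _ => integrable_comp_of_finite ((hgX i).prodMk (hY i))
          fun z => -Real.log (symmetricChannel ε z.1 z.2)
    _ ≤ ∑ _i : ι, fanoBound (Fintype.card β) ε := Finset.sum_le_sum fun i _ =>
        integral_neg_log_symmetricChannel_le (hY i) (hgX i) hε (hYg i)
    _ = Fintype.card ι * fanoBound (Fintype.card β) ε := by
        rw [Finset.sum_const, Finset.card_univ, nsmul_eq_mul]

end Fano

section FiniteWindow

variable {ι : Type*} {A : ι → Type*} [∀ i, MeasurableSpace (A i)] {μ : Measure (∀ i, A i)}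
  [IsFiniteMeasure μ]

lemma exists_measurableCylinder_measureReal_symmDiff_le {s : Set (∀ i, A i)} (hs : MeasurableSet s)
    {ε : ℝ} (hε : 0 < ε) :
    ∃ t ∈ measurableCylinders A, μ.real (symmDiff t s) ≤ ε := by
  obtain ⟨t, ht, htε⟩ := exists_measure_symmDiff_lt_of_generateFrom_isSetRing (μ := μ)
    isSetRing_measurableCylinders
    ⟨{Set.univ}, Set.countable_singleton _,
      Set.singleton_subset_iff.2 (univ_mem_measurableCylinders A), by simp⟩
    generateFrom_measurableCylinders.symm hs (ENNReal.ofReal_pos.2 hε)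
  exact ⟨t, ht, ENNReal.toReal_le_of_le_ofReal hε.le htε.le⟩

lemma exists_finset_measureReal_ne_comp_restrict_le {B : Type*} [Finite B] [MeasurableSpace B]
    [DiscreteMeasurableSpace B] [Nonempty B] {Y : (∀ i, A i) → B} (hY : Measurable Y)
    {ε : ℝ} (hε : 0 < ε) :
    ∃ (F : Finset ι) (f : (∀ i : F, A i) → B),
      μ.real {x | Y x ≠ f (F.restrict x)} ≤ ε := by
  classical
  have := Fintype.ofFinite B
  have hcard : (0 : ℝ) < Fintype.card B := mod_cast Fintype.card_pos
  choose C hC hCε using fun b : B => exists_measurableCylinder_measureReal_symmDiff_le (μ := μ)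
    (hY (measurableSet_singleton b)) (div_pos hε hcard)
  choose F S _ hCS using fun b => (mem_measurableCylinders (C b)).1 (hC b)
  let G : Finset ι := Finset.univ.biUnion F
  have hFG (b : B) : F b ⊆ G := Finset.subset_biUnion_of_mem F (Finset.mem_univ b)
  let f (w : ∀ i : G, A i) : B :=
    Classical.epsilon fun b => Finset.restrict₂ (hFG b) w ∈ S b
  have hf (x : ∀ i, A i) : f (G.restrict x) = Classical.epsilon fun b => x ∈ C b := by
    simp only [hCS]
    rfl
  have hsub : {x | Y x ≠ f (G.restrict x)} ⊆ ⋃ b, symmDiff (C b) (Y ⁻¹' {b}) := by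
    intro x hx
    by_contra hmem
    have hiff (b : B) : x ∈ C b ↔ Y x = b := by
      have hb : x ∉ symmDiff (C b) (Y ⁻¹' {b}) := fun h => hmem (Set.mem_iUnion_of_mem b h)
      simp only [Set.mem_symmDiff, Set.mem_preimage, Set.mem_singleton_iff] at hb
      tauto
    refine hx ?_
    rw [hf]
    exact (hiff _).1 (Classical.epsilon_spec (p := fun b => x ∈ C b) ⟨Y x, (hiff _).2 rfl⟩)
  refine ⟨G, f, ?_⟩
  calc μ.real {x | Y x ≠ f (G.restrict x)}
      ≤ μ.real (⋃ b, symmDiff (C b) (Y ⁻¹' {b})) := measureReal_mono hsub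
    _ ≤ ∑ b, μ.real (symmDiff (C b) (Y ⁻¹' {b})) := measureReal_iUnion_fintype_le _
    _ ≤ ∑ _b : B, ε / Fintype.card B := Finset.sum_le_sum fun b _ => hCε b
    _ = ε := by
      rw [Finset.sum_const, Finset.card_univ, nsmul_eq_mul, mul_div_cancel₀ _ hcard.ne']

end FiniteWindow

section Shift

variable {A : Type*}

lemma measurable_shift [MeasurableSpace A] : Measurable (shift (A := A)) :=
  measurable_pi_lambda _ fun _ => measurable_pi_apply _

lemma shift_iterate_apply (n : ℕ) (x : ℤ → A) (j : ℤ) : shift^[n] x j = x (j + n) := by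
  induction n generalizing x with
  | zero => simp
  | succ k ih =>
    rw [Function.iterate_succ_apply, ih, shift]
    congr 1
    push_cast
    ring

end Shift

namespace IsProbVector

variable {A : Type*} [Fintype A] {p : A → ℝ}

lemma nonempty (hp : IsProbVector p) : Nonempty A := by
  by_contra! hA
  simpa using hp.2

end IsProbVector

namespace IsBernoulliMeasure

variable {A : Type*} [MeasurableSpace A] {p : A → ℝ} {μ : Measure (ℤ → A)}

lemma measure_preimage_eval (hμ : IsBernoulliMeasure μ p) (i : ℤ) (a : A) :
    μ ((fun x => x i) ⁻¹' {a}) = ENNReal.ofReal (p a) := by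
  have h := hμ {i} fun _ => a
  simp only [Finset.mem_singleton, forall_eq, Finset.prod_singleton] at h
  exact h

variable [Fintype A]

lemma isProbabilityMeasure (hp : IsProbVector p) (hμ : IsBernoulliMeasure μ p) :
    IsProbabilityMeasure μ := by
  obtain ⟨a⟩ := hp.nonempty
  exact ⟨by simpa using hμ ∅ fun _ => a⟩

lemma isProbabilityMeasure_map_eval (hp : IsProbVector p) (hμ : IsBernoulliMeasure μ p) (i : ℤ) :
    IsProbabilityMeasure (μ.map fun x => x i) :=
  have := hμ.isProbabilityMeasure hp
  Measure.isProbabilityMeasure_map (measurable_pi_apply i).aemeasurable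

lemma measure_preimage_restrict (hp : IsProbVector p) (hμ : IsBernoulliMeasure μ p)
    (F : Finset ℤ) (w : F → A) :
    μ (F.restrict ⁻¹' {w}) = ∏ i, ENNReal.ofReal (p (w i)) := by
  obtain ⟨a⟩ := hp.nonempty
  let s (i : ℤ) : A := if h : i ∈ F then w ⟨i, h⟩ else a
  have hs (i : F) : s i = w i := dif_pos i.2
  have hset : (F.restrict : (ℤ → A) → F → A) ⁻¹' {w} = {x | ∀ i ∈ F, x i = s i} := by
    ext x
    simp [funext_iff, ← hs]
  rw [hset, hμ, ENNReal.ofReal_prod_of_nonneg fun i _ => (hp.1 _).le, ← Finset.prod_coe_sort]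
  simp only [hs]

lemma shannonEntropy_eval (hp : IsProbVector p) (hμ : IsBernoulliMeasure μ p) (i : ℤ) :
    shannonEntropy (fun x => x i) μ = vecEntropy p := by
  simp only [shannonEntropy, measureReal_def, hμ.measure_preimage_eval,
    ENNReal.toReal_ofReal (hp.1 _).le, Real.negMulLog, vecEntropy, neg_mul,
    Finset.sum_neg_distrib]

variable [DiscreteMeasurableSpace A]

lemma eq_infinitePi (hp : IsProbVector p) (hμ : IsBernoulliMeasure μ p) :
    μ = Measure.infinitePi fun _ => μ.map fun x => x 0 := by
  have := hμ.isProbabilityMeasure hp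
  have := hμ.isProbabilityMeasure_map_eval hp 0
  refine IsProjectiveLimit.unique (fun F => Measure.ext_of_singleton fun w => ?_)
    (Measure.isProjectiveLimit_infinitePi _)
  rw [Measure.map_apply (by fun_prop) (measurableSet_singleton _), Measure.pi_singleton,
    hμ.measure_preimage_restrict hp]
  refine Finset.prod_congr rfl fun i _ => ?_
  rw [Measure.map_apply (by fun_prop) (measurableSet_singleton _), hμ.measure_preimage_eval]

lemma iIndepFun_eval (hp : IsProbVector p) (hμ : IsBernoulliMeasure μ p) :
    iIndepFun (fun (i : ℤ) (x : ℤ → A) => x i) μ := by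
  have := hμ.isProbabilityMeasure hp
  have := hμ.isProbabilityMeasure_map_eval hp 0
  rw [hμ.eq_infinitePi hp]
  exact iIndepFun_infinitePi (X := fun _ a => a) fun _ => measurable_id

lemma measurePreserving_shift (hp : IsProbVector p) (hμ : IsBernoulliMeasure μ p) :
    MeasurePreserving shift μ μ := by
  have := hμ.isProbabilityMeasure hp
  have := hμ.isProbabilityMeasure_map_eval hp 0
  refine ⟨measurable_shift, ?_⟩
  rw [hμ.eq_infinitePi hp]
  exact Measure.map_infinitePi_infinitePi_of_inj (add_left_injective (1 : ℤ))

lemma shannonEntropy_block {ι : Type*} [Fintype ι] [DecidableEq ι] (hp : IsProbVector p)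
    (hμ : IsBernoulliMeasure μ p) {e : ι → ℤ} (he : Function.Injective e) :
    shannonEntropy (fun x i => x (e i)) μ = Fintype.card ι * vecEntropy p := by
  rw [shannonEntropy_pi_of_iIndepFun (fun i => measurable_pi_apply (e i))
    ((hμ.iIndepFun_eval hp).precomp he)]
  simp only [hμ.shannonEntropy_eval hp, Finset.sum_const, Finset.card_univ, nsmul_eq_mul]

end IsBernoulliMeasure

namespace IsFactorMap

variable {A B : Type*} [MeasurableSpace A] [MeasurableSpace B] {μ : Measure (ℤ → A)}
  {ν : Measure (ℤ → B)} {D : Set (ℤ → A)} {φ : (ℤ → A) → (ℤ → B)}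

lemma measurable_apply (hφ : IsFactorMap μ ν D φ) (i : ℤ) : Measurable fun x => φ x i :=
  (measurable_pi_apply i).comp hφ.measurable_map

lemma apply_natCast (hφ : IsFactorMap μ ν D φ) {x : ℤ → A} (hx : x ∈ D) (n : ℕ) :
    φ x n = φ (shift^[n] x) 0 := by
  have hiter : shift^[n] x ∈ D ∧ φ (shift^[n] x) = shift^[n] (φ x) := by
    induction n with
    | zero => exact ⟨hx, rfl⟩
    | succ k ih =>
      rw [Function.iterate_succ_apply', Function.iterate_succ_apply', ← ih.2]
      exact ⟨by rw [← Set.mem_preimage, hφ.dom_shift_invariant]; exact ih.1,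
        hφ.equivariant _ ih.1⟩
  rw [hiter.2, shift_iterate_apply, zero_add]

variable [IsProbabilityMeasure μ] [DiscreteMeasurableSpace B]

lemma measureReal_apply_natCast_ne [Countable B] (hφ : IsFactorMap μ ν D φ)
    (hμ : MeasurePreserving shift μ μ) {f : (ℤ → A) → B} (hf : Measurable f) (n : ℕ) :
    μ.real {x | φ x n ≠ f (shift^[n] x)} = μ.real {x | φ x 0 ≠ f x} := by
  have hD : ∀ᵐ x ∂μ, x ∈ D := (prob_compl_eq_zero_iff hφ.dom_measurable).2 hφ.dom_full
  have herr : MeasurableSet {x | φ x 0 ≠ f x} :=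
    (measurableSet_eq_fun (hφ.measurable_apply 0) hf).compl
  rw [← (hμ.iterate n).measureReal_preimage herr.nullMeasurableSet]
  refine measureReal_congr (hD.mono fun x hx => propext ?_)
  exact (congrArg (· ≠ f (shift^[n] x)) (hφ.apply_natCast hx n)).to_iff

/-- The block `φ(x)_0, …, φ(x)_{n-1}` is predicted from `x_{-m}, …, x_{n+m}` by sliding the
window `F`. -/
lemma shannonEntropy_block_le [Fintype A] [DiscreteMeasurableSpace A] [Fintype B]
    (hφ : IsFactorMap μ ν D φ) (hμ : MeasurePreserving shift μ μ) {F : Finset ℤ} {m : ℕ}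
    (hF : F ⊆ Finset.Icc (-m : ℤ) m) {f : (F → A) → B} {ε : ℝ} (hε : ε ∈ Set.Ioo 0 1)
    (hf : μ.real {x | φ x 0 ≠ f (F.restrict x)} ≤ ε) (n : ℕ) :
    shannonEntropy (fun x (i : Fin n) => φ x (i : ℕ)) μ
      ≤ shannonEntropy (Finset.Icc (-m : ℤ) (n + m)).restrict μ
        + n * fanoBound (Fintype.card B) ε := by
  have hmem (i : Fin n) (j : F) : (j + (i : ℕ) : ℤ) ∈ Finset.Icc (-m : ℤ) (n + m) := by
    have hj := Finset.mem_Icc.1 (hF j.2)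
    exact Finset.mem_Icc.2 ⟨by omega, by omega⟩
  let g (i : Fin n) (w : Finset.Icc (-m : ℤ) (n + m) → A) : B := f fun j => w ⟨_, hmem i j⟩
  have hg (i : Fin n) (x : ℤ → A) :
      g i (Finset.restrict _ x) = f (F.restrict (shift^[i] x)) :=
    congrArg f (funext fun j => (shift_iterate_apply i x j).symm)
  have herr (i : Fin n) : μ.real {x | φ x (i : ℕ) ≠ g i (Finset.restrict _ x)} ≤ ε := by
    simp only [hg]
    exact (hφ.measureReal_apply_natCast_ne hμ
      ((measurable_of_finite f).comp (Finset.measurable_restrict F)) i).trans_le hf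
  simpa only [Fintype.card_fin] using shannonEntropy_pi_le_add_fanoBound
    (Finset.measurable_restrict _) (fun i : Fin n => hφ.measurable_apply (i : ℕ)) g hε herr

end IsFactorMap

section BernoulliFactor

variable {A B : Type*} [Fintype A] [Fintype B]
  [MeasurableSpace A] [DiscreteMeasurableSpace A] [MeasurableSpace B] [DiscreteMeasurableSpace B]
  {p : A → ℝ} {q : B → ℝ} {μ : Measure (ℤ → A)} {ν : Measure (ℤ → B)}
  {D : Set (ℤ → A)} {φ : (ℤ → A) → (ℤ → B)}

lemma IsFactorMap.vecEntropy_le_add_fanoBound (hp : IsProbVector p) (hq : IsProbVector q)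
    (hμ : IsBernoulliMeasure μ p) (hν : IsBernoulliMeasure ν q) (hφ : IsFactorMap μ ν D φ)
    {ε : ℝ} (hε : ε ∈ Set.Ioo 0 1) :
    vecEntropy q ≤ vecEntropy p + fanoBound (Fintype.card B) ε := by
  have := hμ.isProbabilityMeasure hp
  have := hq.nonempty
  obtain ⟨F, f, hf⟩ :=
    exists_finset_measureReal_ne_comp_restrict_le (μ := μ) (hφ.measurable_apply 0) hε.1
  obtain ⟨m, hF⟩ : ∃ m : ℕ, F ⊆ Finset.Icc (-m : ℤ) m := by
    refine ⟨F.sup Int.natAbs, fun i hi => Finset.mem_Icc.2 ?_⟩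
    have : i.natAbs ≤ F.sup Int.natAbs := Finset.le_sup hi
    omega
  have hblock (n : ℕ) : n * vecEntropy q
      ≤ (n + 2 * m + 1) * vecEntropy p + n * fanoBound (Fintype.card B) ε := by
    have hsource : shannonEntropy (Finset.Icc (-m : ℤ) (n + m)).restrict μ
        = (n + 2 * m + 1) * vecEntropy p := by
      have hcard : (Finset.Icc (-m : ℤ) (n + m)).card = n + 2 * m + 1 := by
        rw [Int.card_Icc]
        omega
      refine (hμ.shannonEntropy_block hp Subtype.val_injective).trans ?_
      rw [Fintype.card_coe, hcard]
      push_cast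
      rfl
    have hfactor : shannonEntropy (fun x (i : Fin n) => φ x (i : ℕ)) μ = n * vecEntropy q := by
      have h := hν.shannonEntropy_block hq (Nat.cast_injective.comp (Fin.val_injective (n := n)))
      rw [hφ.pushforward, shannonEntropy_map hφ.measurable_map
        (measurable_pi_lambda _ fun i => measurable_pi_apply _), Fintype.card_fin] at h
      exact h
    exact hsource ▸ hfactor ▸ hφ.shannonEntropy_block_le (hμ.measurePreserving_shift hp) hF hε hf n
  by_contra! hlt
  obtain ⟨n, hn⟩ := exists_lt_nsmul (sub_pos.2 hlt) ((2 * m + 1) * vecEntropy p)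
  rw [nsmul_eq_mul] at hn
  linarith [hblock n]

theorem IsFactorMap.vecEntropy_le (hp : IsProbVector p) (hq : IsProbVector q)
    (hμ : IsBernoulliMeasure μ p) (hν : IsBernoulliMeasure ν q) (hφ : IsFactorMap μ ν D φ) :
    vecEntropy q ≤ vecEntropy p := by
  have hlim : Tendsto (fun ε => vecEntropy p + fanoBound (Fintype.card B) ε)
      (nhdsWithin 0 (Set.Ioi 0)) (nhds (vecEntropy p)) := by
    simpa using ((tendsto_fanoBound _).mono_left nhdsWithin_le_nhds).const_add (vecEntropy p)
  refine ge_of_tendsto hlim ?_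
  filter_upwards [Ioo_mem_nhdsGT zero_lt_one] with ε hε
  exact hφ.vecEntropy_le_add_fanoBound hp hq hμ hν hε

theorem entropy_eq_of_measurably_isomorphic_general (hp : IsProbVector p) (hq : IsProbVector q)
    (hμ : IsBernoulliMeasure μ p) (hν : IsBernoulliMeasure ν q)
    {E : Set (ℤ → B)} {ψ : (ℤ → B) → (ℤ → A)}
    (hφ : IsFactorMap μ ν D φ) (hψ : IsFactorMap ν μ E ψ) : vecEntropy p = vecEntropy q :=
  le_antisymm (hψ.vecEntropy_le hq hp hν hμ) (hφ.vecEntropy_le hp hq hμ hν)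

end BernoulliFactor

/-- **Kolmogorov–Sinai.** If the Bernoulli schemes `BS(p)` and `BS(q)` are measurably
isomorphic, then `H(p) = H(q)`. -/
theorem entropy_eq_of_measurably_isomorphic
    {A B : Type*} [Fintype A] [Fintype B]
    [MeasurableSpace A] [DiscreteMeasurableSpace A]
    [MeasurableSpace B] [DiscreteMeasurableSpace B]
    (p : A → ℝ) (q : B → ℝ) (hp : IsProbVector p) (hq : IsProbVector q)
    (μ : Measure (ℤ → A)) (ν : Measure (ℤ → B))
    (hμ : IsBernoulliMeasure μ p) (hν : IsBernoulliMeasure ν q)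
    (D : Set (ℤ → A)) (E : Set (ℤ → B))
    (φ : (ℤ → A) → (ℤ → B)) (ψ : (ℤ → B) → (ℤ → A))
    (hiso : IsMeasurableIsomorphism μ ν D E φ ψ) :
    vecEntropy p = vecEntropy q :=
  entropy_eq_of_measurably_isomorphic_general hp hq hμ hν hiso.1 hiso.2.1
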